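/- Suppose d is not constant on R (and |R| ≥ 2). Then the sets R₊ = {i ∈ R : d_i ≤ m} and R₋ = {i ∈ R : d_i > m} are both nonempty, so they form a cutting of R, and its exact refinement indicator satisfies ΔJ ≥ (∑_{i∈R} |m − d_i|)² / (2p) > 0. In particular, every region on which the image is not constant admits a cutting strictly decreasing the least-squares misfit. -/

import Mathlib

/-!
Let `A` and `B` be the sums of `d - m` over the two parts of a cutting, `m` being the mean of the
whole region. Comparing each part's mean with `m` gives `2 ΔJ = A² / |R₊| + B² / |R₋|`. By
Sedrakyan's inequality this is at least `(|A| + |B|)² / |R|`, and cutting at the level `m` makes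
`d - m` of constant sign on each part, so that `|A| + |B|` is the sum of all `|m - d i|`.
-/

section

open Finset
open scoped BigOperators

variable {ι : Type*}

/-- `(Rp, Rm)` is a cutting `(R₊, R₋)` of `R`: a partition of `R` into two nonempty sets. The
disjoint union of finsets keeps the notion free of decidability assumptions on `ι`. -/
structure IsCutting (R Rp Rm : Finset ι) : Prop where
  nonempty_left : Rp.Nonempty
  nonempty_right : Rm.Nonempty
  disjoint : Disjoint Rp Rm
  disjUnion_eq : Rp.disjUnion Rm disjoint = R

namespace IsCutting

variable {R Rp Rm : Finset ι}

theorem sum_eq {M : Type*} [AddCommMonoid M] (h : IsCutting R Rp Rm) (f : ι → M) :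
    ∑ i ∈ R, f i = ∑ i ∈ Rp, f i + ∑ i ∈ Rm, f i := by
  rw [← h.disjUnion_eq, sum_disjUnion]

theorem card_eq (h : IsCutting R Rp Rm) : #R = #Rp + #Rm := by
  rw [← h.disjUnion_eq, card_disjUnion]

end IsCutting

theorem sum_sub_expect_eq_zero {M : Type*} [AddCommGroup M] [Module ℚ≥0 M] (s : Finset ι)
    (d : ι → M) : ∑ i ∈ s, (d i - 𝔼 j ∈ s, d j) = 0 := by
  rw [sum_sub_distrib, sum_const, card_smul_expect, sub_self]

section Misfit

variable {K : Type*} [Field K] [CharZero K]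

/-- The sum of the squared deviations of `d` from its mean on `s`: twice the least-squares misfit
of the best constant approximation of `d` on `s`. -/
def sumSqDev (s : Finset ι) (d : ι → K) : K :=
  ∑ i ∈ s, (d i - 𝔼 j ∈ s, d j) ^ 2

theorem sum_sub_sq_eq_sumSqDev_add (s : Finset ι) (d : ι → K) (c : K) :
    ∑ i ∈ s, (d i - c) ^ 2 = sumSqDev s d + (∑ i ∈ s, (d i - c)) ^ 2 / #s := by
  set μ := 𝔼 j ∈ s, d j
  have sum_sub : ∑ i ∈ s, (d i - c) = #s * (μ - c) := by
    rw [sum_sub_distrib, sum_const, nsmul_eq_mul, mul_sub, card_mul_expect]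
  calc ∑ i ∈ s, (d i - c) ^ 2
      = ∑ i ∈ s, ((d i - μ) ^ 2 + 2 * (μ - c) * (d i - μ) + (μ - c) ^ 2) :=
        sum_congr rfl fun i _ => by ring
    _ = sumSqDev s d + #s * (μ - c) ^ 2 := by
        rw [sum_add_distrib, sum_add_distrib, ← mul_sum, sum_sub_expect_eq_zero, mul_zero,
          add_zero, sum_const, nsmul_eq_mul, sumSqDev]
    _ = sumSqDev s d + (∑ i ∈ s, (d i - c)) ^ 2 / #s := by
        rw [sum_sub]
        obtain rfl | _ := s.eq_empty_or_nonempty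
        · simp
        · field_simp

/-- The exact refinement indicator `ΔJ` of the cutting `(Rp, Rm)` of `R`: the decrease of the
least-squares misfit when the mean over `R` is replaced by the separate means over `Rp` and `Rm`.
The formula is stated for any three finite sets; being a cutting is expressed by `IsCutting`. -/
def refinementIndicator (R Rp Rm : Finset ι) (d : ι → K) : K :=
  1 / 2 * sumSqDev R d - 1 / 2 * (sumSqDev Rp d + sumSqDev Rm d)

theorem IsCutting.refinementIndicator_eq {R Rp Rm : Finset ι} (h : IsCutting R Rp Rm)
    (d : ι → K) :
    refinementIndicator R Rp Rm d =
      1 / 2 * ((∑ i ∈ Rp, (d i - 𝔼 j ∈ R, d j)) ^ 2 / #Rp +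
        (∑ i ∈ Rm, (d i - 𝔼 j ∈ R, d j)) ^ 2 / #Rm) := by
  rw [refinementIndicator, sumSqDev, h.sum_eq, sum_sub_sq_eq_sumSqDev_add Rp,
    sum_sub_sq_eq_sumSqDev_add Rm]
  ring

end Misfit

theorem IsCutting.sq_div_le_refinementIndicator {K : Type*} [Field K] [LinearOrder K]
    [IsStrictOrderedRing K] {R Rp Rm : Finset ι} (h : IsCutting R Rp Rm) (d : ι → K) :
    (|∑ i ∈ Rp, (d i - 𝔼 j ∈ R, d j)| + |∑ i ∈ Rm, (d i - 𝔼 j ∈ R, d j)|) ^ 2 / (2 * #R) ≤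
      refinementIndicator R Rp Rm d := by
  set A := ∑ i ∈ Rp, (d i - 𝔼 j ∈ R, d j)
  set B := ∑ i ∈ Rm, (d i - 𝔼 j ∈ R, d j)
  have card_left : (0 : K) < #Rp := mod_cast h.nonempty_left.card_pos
  have card_right : (0 : K) < #Rm := mod_cast h.nonempty_right.card_pos
  have sedrakyan : (|A| + |B|) ^ 2 / (#Rp + #Rm) ≤ |A| ^ 2 / #Rp + |B| ^ 2 / #Rm := by
    simpa using sq_sum_div_le_sum_sq_div univ ![|A|, |B|] (g := ![(#Rp : K), #Rm])
      (by simp [card_left, card_right])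
  calc (|A| + |B|) ^ 2 / (2 * #R) = 1 / 2 * ((|A| + |B|) ^ 2 / (#Rp + #Rm)) := by
        rw [h.card_eq, Nat.cast_add]
        field_simp
    _ ≤ 1 / 2 * (|A| ^ 2 / #Rp + |B| ^ 2 / #Rm) := by gcongr
    _ = refinementIndicator R Rp Rm d := by
        rw [sq_abs, sq_abs, h.refinementIndicator_eq]

section CutAtMean

variable {M : Type*} [AddCommGroup M] [LinearOrder M] [IsOrderedAddMonoid M]

theorem sum_abs_sub_eq_abs_sum_filter_add (s : Finset ι) (d : ι → M) (c : M) :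
    ∑ i ∈ s, |c - d i| =
      |∑ i ∈ s with d i ≤ c, (d i - c)| + |∑ i ∈ s with c < d i, (d i - c)| := by
  have abs_sum_le : |∑ i ∈ s with d i ≤ c, (d i - c)| = ∑ i ∈ s with d i ≤ c, |c - d i| := by
    have nonneg : ∀ i ∈ s.filter (d · ≤ c), 0 ≤ c - d i :=
      fun i hi => sub_nonneg.2 (mem_filter.1 hi).2
    calc |∑ i ∈ s with d i ≤ c, (d i - c)| = |∑ i ∈ s with d i ≤ c, (c - d i)| := by
          rw [← abs_neg, ← sum_neg_distrib]
          simp only [neg_sub]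
      _ = ∑ i ∈ s with d i ≤ c, (c - d i) := abs_sum_of_nonneg nonneg
      _ = ∑ i ∈ s with d i ≤ c, |c - d i| :=
          sum_congr rfl fun i hi => (abs_of_nonneg (nonneg i hi)).symm
  have abs_sum_lt : |∑ i ∈ s with c < d i, (d i - c)| = ∑ i ∈ s with c < d i, |c - d i| := by
    have nonneg : ∀ i ∈ s.filter (c < d ·), 0 ≤ d i - c :=
      fun i hi => sub_nonneg.2 (mem_filter.1 hi).2.le
    rw [abs_sum_of_nonneg nonneg]
    exact sum_congr rfl fun i hi => by rw [abs_sub_comm, abs_of_nonneg (nonneg i hi)]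
  rw [abs_sum_le, abs_sum_lt, ← sum_filter_add_sum_filter_not s (d · ≤ c)]
  simp only [not_le]

variable [Module ℚ≥0 M] [PosSMulStrictMono ℚ≥0 M] {R : Finset ι} {d : ι → M}

theorem exists_expect_lt_of_exists_ne (hd : ∃ i ∈ R, ∃ j ∈ R, d i ≠ d j) :
    ∃ i ∈ R, 𝔼 j ∈ R, d j < d i := by
  obtain ⟨i, hi, j, hj, hij⟩ := hd
  by_contra! hle
  have exists_lt : ∃ k ∈ R, d k < 𝔼 j ∈ R, d j := by
    by_contra! hge
    have eq_mean : ∀ k ∈ R, d k = 𝔼 j ∈ R, d j := fun k hk => (hle k hk).antisymm (hge k hk)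
    exact hij ((eq_mean i hi).trans (eq_mean j hj).symm)
  exact (expect_lt hle exists_lt).false

theorem sum_abs_expect_sub_pos (hd : ∃ i ∈ R, ∃ j ∈ R, d i ≠ d j) :
    0 < ∑ i ∈ R, |(𝔼 j ∈ R, d j) - d i| := by
  obtain ⟨i, hi, hlt⟩ := exists_expect_lt_of_exists_ne hd
  exact sum_pos' (fun _ _ => abs_nonneg _) ⟨i, hi, abs_pos.2 (sub_neg.2 hlt).ne⟩

theorem isCutting_filter_expect (hd : ∃ i ∈ R, ∃ j ∈ R, d i ≠ d j) :
    IsCutting R {i ∈ R | d i ≤ 𝔼 j ∈ R, d j} {i ∈ R | 𝔼 j ∈ R, d j < d i} where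
  nonempty_left :=
    let ⟨i, hi, _⟩ := hd
    filter_nonempty_iff.2 (exists_le_of_expect_le ⟨i, hi⟩ le_rfl)
  nonempty_right := filter_nonempty_iff.2 (exists_expect_lt_of_exists_ne hd)
  disjoint := disjoint_filter.2 fun _ _ => not_lt_of_ge
  disjUnion_eq := by
    ext i
    simp only [mem_disjUnion, mem_filter, ← and_or_left, le_or_gt, and_true]

end CutAtMean

theorem nonconstant_region_admits_decreasing_cutting_general {K : Type*} [Field K]
    [LinearOrder K] [IsStrictOrderedRing K] (R : Finset ι) (d : ι → K)
    (hd : ∃ i ∈ R, ∃ j ∈ R, d i ≠ d j) :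
    let m := 𝔼 i ∈ R, d i
    let Rp := {i ∈ R | d i ≤ m}
    let Rm := {i ∈ R | m < d i}
    IsCutting R Rp Rm ∧
      (∑ i ∈ R, |m - d i|) ^ 2 / (2 * #R) ≤ refinementIndicator R Rp Rm d ∧
      0 < (∑ i ∈ R, |m - d i|) ^ 2 / (2 * #R) := by
  intro m Rp Rm
  have cutting : IsCutting R Rp Rm := isCutting_filter_expect hd
  have card_pos : 0 < #R := by
    obtain ⟨i, hi, -⟩ := hd
    exact card_pos.2 ⟨i, hi⟩
  have abs_pos : 0 < ∑ i ∈ R, |m - d i| := sum_abs_expect_sub_pos hd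
  refine ⟨cutting, ?_, by positivity⟩
  rw [sum_abs_sub_eq_abs_sum_filter_add]
  exact cutting.sq_div_le_refinementIndicator d

end

/-- If d is not constant on R (and |R| ≥ 2), then R₊ = {d_i ≤ m} and
R₋ = {d_i > m} are both nonempty, forming a cutting of R whose exact refinement
indicator satisfies ΔJ ≥ (∑_{i∈R} |m − d_i|)²/(2p) > 0. -/
theorem nonconstant_region_admits_decreasing_cutting {ι : Type*} [DecidableEq ι]
    (R : Finset ι) (hR : R.Nonempty) (hcard : 2 ≤ R.card) (d : ι → ℝ)
    (hnc : ∃ i ∈ R, ∃ j ∈ R, d i ≠ d j) :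
    let m := (∑ i ∈ R, d i) / R.card
    let Rp := R.filter fun i => d i ≤ m
    let Rm := R.filter fun i => m < d i
    let cp := (∑ i ∈ Rp, d i) / Rp.card
    let cm := (∑ i ∈ Rm, d i) / Rm.card
    let ΔJ := (1/2) * ∑ i ∈ R, (d i - m)^2
          - (1/2) * ((∑ i ∈ Rp, (d i - cp)^2) + ∑ i ∈ Rm, (d i - cm)^2)
    Rp.Nonempty ∧ Rm.Nonempty ∧
      (∑ i ∈ R, |m - d i|)^2 / (2 * (R.card : ℝ)) ≤ ΔJ ∧ 0 < ΔJ := by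
  have h := nonconstant_region_admits_decreasing_cutting_general R d hnc
  simp only [refinementIndicator, sumSqDev, Finset.expect_eq_sum_div_card] at h
  obtain ⟨cutting, bound_le, bound_pos⟩ := h
  exact ⟨cutting.nonempty_left, cutting.nonempty_right, bound_le, bound_pos.trans_le bound_le⟩
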